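/- Thompson canonical form: every skew-symmetric n×n complex matrix pencil A − λB is congruent to a direct sum of blocks of the forms H_h(μ) with μ ∈ ℂ, K_k, and M_m, and this direct sum is uniquely determined up to permutation of the summands. -/

import Mathlib

/-!
Basic framework: a complex `m × n` matrix pencil `A - λ B` is formalized as the
pair `(A, B)` of matrices.  We define strict equivalence, congruence,
skew-symmetry, orbits, direct sums, and the cover relations for the orbit
closure hierarchies (in the Euclidean topology).
-/

open Matrix

noncomputable section

/-- An `m × n` complex matrix pencil `A - λ B`, formalized as the pair `(A, B)`. -/
abbrev Pencil (m n : ℕ) : Type :=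
  Matrix (Fin m) (Fin n) ℂ × Matrix (Fin m) (Fin n) ℂ

namespace Pencil

/-- Strict equivalence of matrix pencils: `Q⁻¹ * A * R = C` and `Q⁻¹ * B * R = D`
for some invertible `Q`, `R`. -/
def StrictEquiv {m n : ℕ} (P Q : Pencil m n) : Prop :=
  ∃ (S : Matrix (Fin m) (Fin m) ℂ) (R : Matrix (Fin n) (Fin n) ℂ),
    IsUnit S ∧ IsUnit R ∧ S⁻¹ * P.1 * R = Q.1 ∧ S⁻¹ * P.2 * R = Q.2

/-- The strict-equivalence orbit of a pencil. -/
def orbE {m n : ℕ} (P : Pencil m n) : Set (Pencil m n) :=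
  {Q | StrictEquiv P Q}

/-- A pencil `A - λ B` is skew-symmetric if `Aᵀ = -A` and `Bᵀ = -B`. -/
def IsSkew {n : ℕ} (P : Pencil n n) : Prop :=
  P.1ᵀ = -P.1 ∧ P.2ᵀ = -P.2

/-- Congruence of (square) matrix pencils: `Sᵀ * A * S = C` and `Sᵀ * B * S = D`
for some invertible `S`. -/
def Congruent {n : ℕ} (P Q : Pencil n n) : Prop :=
  ∃ S : Matrix (Fin n) (Fin n) ℂ,
    IsUnit S ∧ Sᵀ * P.1 * S = Q.1 ∧ Sᵀ * P.2 * S = Q.2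

/-- The congruence orbit of a pencil. -/
def orbC {n : ℕ} (P : Pencil n n) : Set (Pencil n n) :=
  {Q | Congruent P Q}

/-- Direct (block-diagonal) sum of two pencils. -/
def dsum {m n p q : ℕ} (P : Pencil m n) (Q : Pencil p q) : Pencil (m + p) (n + q) :=
  ((fromBlocks P.1 0 0 Q.1).submatrix finSumFinEquiv.symm finSumFinEquiv.symm,
   (fromBlocks P.2 0 0 Q.2).submatrix finSumFinEquiv.symm finSumFinEquiv.symm)

/-- Transport a pencil along equalities of its dimensions. -/
def cast {m n m' n' : ℕ} (hm : m = m') (hn : n = n') (P : Pencil m n) : Pencil m' n' :=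
  (P.1.submatrix (finCongr hm.symm) (finCongr hn.symm),
   P.2.submatrix (finCongr hm.symm) (finCongr hn.symm))

/-- `orbE P1` covers `orbE P2` in the closure hierarchy of strict-equivalence
orbits: `P1` is not strictly equivalent to `P2`, `orbE P2 ⊆ closure (orbE P1)`,
and there is no intermediate orbit strictly between them. -/
def CoversE {m n : ℕ} (P1 P2 : Pencil m n) : Prop :=
  ¬ StrictEquiv P1 P2 ∧ orbE P2 ⊆ closure (orbE P1) ∧
    ¬ ∃ P : Pencil m n, ¬ StrictEquiv P P1 ∧ ¬ StrictEquiv P P2 ∧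
        orbE P ⊆ closure (orbE P1) ∧ orbE P2 ⊆ closure (orbE P)

/-- `orbC P1` covers `orbC P2` in the closure hierarchy of congruence orbits of
skew-symmetric pencils: `P1` is not congruent to `P2`,
`orbC P2 ⊆ closure (orbC P1)`, and there is no congruence orbit of a
skew-symmetric pencil strictly between them. -/
def CoversC {n : ℕ} (P1 P2 : Pencil n n) : Prop :=
  ¬ Congruent P1 P2 ∧ orbC P2 ⊆ closure (orbC P1) ∧
    ¬ ∃ P : Pencil n n, IsSkew P ∧ ¬ Congruent P P1 ∧ ¬ Congruent P P2 ∧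
        orbC P ⊆ closure (orbC P1) ∧ orbC P2 ⊆ closure (orbC P)

end Pencil

/-! Canonical building blocks. -/

/-- The `k × k` Jordan block `J_k(μ)`. -/
def Jmat (k : ℕ) (μ : ℂ) : Matrix (Fin k) (Fin k) ℂ :=
  Matrix.of fun i j => if (j : ℕ) = (i : ℕ) then μ else if (j : ℕ) = (i : ℕ) + 1 then 1 else 0

/-- The `k × (k+1)` matrix `F_k` with ones on the superdiagonal. -/
def Fmat (k : ℕ) : Matrix (Fin k) (Fin (k + 1)) ℂ :=
  Matrix.of fun i j => if (j : ℕ) = (i : ℕ) + 1 then 1 else 0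

/-- The `k × (k+1)` matrix `G_k` with ones on the diagonal. -/
def Gmat (k : ℕ) : Matrix (Fin k) (Fin (k + 1)) ℂ :=
  Matrix.of fun i j => if (j : ℕ) = (i : ℕ) then 1 else 0

/-- The Kronecker block `E_k(μ) = J_k(μ) - λ I_k`. -/
def Eblk (k : ℕ) (μ : ℂ) : Pencil k k := (Jmat k μ, 1)

/-- The Kronecker block `E_k(∞) = I_k - λ J_k(0)`. -/
def EInfblk (k : ℕ) : Pencil k k := (1, Jmat k 0)

/-- The Kronecker block `L_k = F_k - λ G_k`. -/
def Lblk (k : ℕ) : Pencil k (k + 1) := (Fmat k, Gmat k)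

/-- The Kronecker block `L_kᵀ = F_kᵀ - λ G_kᵀ`. -/
def LTblk (k : ℕ) : Pencil (k + 1) k := ((Fmat k)ᵀ, (Gmat k)ᵀ)

/-- The skew-symmetric matrix `[[0, X], [-Xᵀ, 0]]`. -/
def skewPair {p q : ℕ} (X : Matrix (Fin p) (Fin q) ℂ) :
    Matrix (Fin (p + q)) (Fin (p + q)) ℂ :=
  (fromBlocks 0 X (-Xᵀ) 0).submatrix finSumFinEquiv.symm finSumFinEquiv.symm

/-- The skew-symmetric canonical block `H_h(μ)` (size `2h × 2h`). -/
def Hblk (h : ℕ) (μ : ℂ) : Pencil (h + h) (h + h) :=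
  (skewPair (Jmat h μ), skewPair (1 : Matrix (Fin h) (Fin h) ℂ))

/-- The skew-symmetric canonical block `K_k = H_k(∞)` (size `2k × 2k`). -/
def Kblk (k : ℕ) : Pencil (k + k) (k + k) :=
  (skewPair (1 : Matrix (Fin k) (Fin k) ℂ), skewPair (Jmat k 0))

/-- The skew-symmetric canonical block `M_m` (size `(2m+1) × (2m+1)`). -/
def Mblk (m : ℕ) : Pencil (m + (m + 1)) (m + (m + 1)) :=
  (skewPair (Fmat m), skewPair (Gmat m))

/-! Skew-symmetric (Thompson) canonical forms as multisets of block
descriptors. -/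

/-- Descriptor of a skew-symmetric canonical block. -/
inductive SBlock : Type
  | H : ℕ → ℂ → SBlock    -- `H_h(μ)`, `μ ∈ ℂ`
  | K : ℕ → SBlock         -- `K_k = H_k(∞)`
  | M : ℕ → SBlock         -- `M_m`

namespace SBlock

/-- Size of a block. -/
def size : SBlock → ℕ
  | H h _ => h + h
  | K k => k + k
  | M m => m + (m + 1)

/-- A block is valid (may occur in a canonical form) if the `H`- and `K`-blocks
have index at least one. -/
def valid : SBlock → Prop
  | H h _ => 1 ≤ h
  | K k => 1 ≤ k
  | M _ => True

/-- The pencil corresponding to a block descriptor. -/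
def toPencil : (b : SBlock) → Pencil b.size b.size
  | H h μ => Hblk h μ
  | K k => Kblk k
  | M m => Mblk m

end SBlock

/-- The block `H_h(μ)` for an eigenvalue `μ ∈ ℂ ∪ {∞}`; `none` encodes `∞`
(so `Hb none h` is the block `K_h`). -/
def Hb : Option ℂ → ℕ → SBlock
  | some μ, h => SBlock.H h μ
  | none, h => SBlock.K h

/-- Total size of a list of blocks. -/
def sizeSum : List SBlock → ℕ
  | [] => 0
  | b :: t => b.size + sizeSum t

/-- The direct sum of the blocks in a list. -/
def spencilOfList : (l : List SBlock) → Pencil (sizeSum l) (sizeSum l)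
  | [] => (0, 0)
  | b :: t => Pencil.dsum b.toPencil (spencilOfList t)

/-- `s` is the multiset of blocks of the skew-symmetric canonical form of `P`,
i.e. `P` is congruent to the direct sum of the blocks of `s`. -/
def RepresentsC {n : ℕ} (P : Pencil n n) (s : Multiset SBlock) : Prop :=
  (∀ b ∈ s, b.valid) ∧
  ∃ (l : List SBlock) (h : sizeSum l = n),
    (l : Multiset SBlock) = s ∧
    Pencil.Congruent (Pencil.cast h h (spencilOfList l)) P

/-- Like `RepresentsC`, but also allowing degenerate (empty) blocks such as
`H_0(μ)` among the summands. -/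
def WeakRepresentsC {n : ℕ} (P : Pencil n n) (s : Multiset SBlock) : Prop :=
  ∃ (l : List SBlock) (h : sizeSum l = n),
    (l : Multiset SBlock) = s ∧
    Pencil.Congruent (Pencil.cast h h (spencilOfList l)) P

section LinearRelations

variable {K V W : Type*} [Field K]
  [AddCommGroup V] [Module K V] [AddCommGroup W] [Module K W]

/-- The iterated preimage of a subspace `Y` under the linear relation `α x = β y`. -/
def relIter (α β : V →ₗ[K] W) (Y : Submodule K V) : ℕ → Submodule K V
  | 0 => Y
  | k + 1 => ((relIter α β Y k).map β).comap α

theorem mem_relIter_succ {α β : V →ₗ[K] W} {Y : Submodule K V} {k : ℕ} {x : V} :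
    x ∈ relIter α β Y (k + 1) ↔ ∃ y ∈ relIter α β Y k, β y = α x := by
  simp [relIter]

theorem exists_chain_of_mem_relIter {α β : V →ₗ[K] W} {Y : Submodule K V} {k : ℕ} {x : V}
    (hx : x ∈ relIter α β Y k) :
    ∃ c : ℕ → V, c 0 = x ∧ c k ∈ Y ∧ ∀ i < k, α (c i) = β (c (i + 1)) := by
  induction k generalizing x with
  | zero => exact ⟨fun _ => x, rfl, hx, by simp⟩
  | succ k ih =>
    obtain ⟨y, hy, hyx⟩ := mem_relIter_succ.1 hx
    obtain ⟨c, hc0, hck, hc⟩ := ih hy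
    refine ⟨fun i => Nat.casesOn i x c, rfl, hck, ?_⟩
    rintro (_ | i) hi
    · simp [hc0, hyx]
    · exact hc i (by omega)

/-- A functional `β · p` annihilating the preimage of `Y` under the relation `α x = β y`
factors through the relation. -/
theorem exists_eq_flip_of_forall_mem_comap [FiniteDimensional K V] (α β : V →ₗ[K] V →ₗ[K] K)
    (Y : Submodule K V) (p : V) (h : ∀ x ∈ (Y.map β).comap α, β x p = 0) :
    ∃ q, (∀ v, α v q = β v p) ∧ ∀ y ∈ Y, β y q = 0 := by
  set F : V × Y →ₗ[K] (V →ₗ[K] K) := α.coprod (-(β.comp Y.subtype)) with hF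
  set ℓ : Module.Dual K (V × Y) := (β.flip p).comp (LinearMap.fst K V Y) with hℓ
  have hmem : ℓ ∈ (LinearMap.ker F).dualAnnihilator := by
    rw [Submodule.mem_dualAnnihilator]
    rintro ⟨x, y⟩ hxy
    have hxy' : α x = β y := by
      have : F (x, y) = 0 := hxy
      simpa [hF, ← sub_eq_add_neg, sub_eq_zero] using this
    exact h x ⟨y, y.2, hxy'.symm⟩
  rw [← LinearMap.range_dualMap_eq_dualAnnihilator_ker] at hmem
  obtain ⟨φ, hφ⟩ := hmem
  obtain ⟨q, rfl⟩ := (Module.evalEquiv K V).surjective φ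
  refine ⟨q, fun v => ?_, fun y hy => ?_⟩
  · simpa [hF, hℓ] using LinearMap.congr_fun hφ (v, 0)
  · simpa [hF, hℓ] using LinearMap.congr_fun hφ (0, ⟨y, hy⟩)

/-- Iterated form of `exists_eq_flip_of_forall_mem_comap`. -/
theorem exists_chain_of_forall_mem_relIter [FiniteDimensional K V] (α β : V →ₗ[K] V →ₗ[K] K)
    (Y : Submodule K V) (k : ℕ) (p : V) (h : ∀ x ∈ relIter α β Y k, β x p = 0) :
    ∃ z : ℕ → V, z 0 = p ∧ (∀ i < k, ∀ v, α v (z (i + 1)) = β v (z i)) ∧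
      ∀ y ∈ Y, β y (z k) = 0 := by
  induction k generalizing p with
  | zero => exact ⟨fun _ => p, rfl, by simp, h⟩
  | succ k ih =>
    obtain ⟨q, hq, hqY⟩ := exists_eq_flip_of_forall_mem_comap α β (relIter α β Y k) p h
    obtain ⟨z, hz0, hz, hzY⟩ := ih q hqY
    refine ⟨fun i => Nat.casesOn i p z, rfl, ?_, hzY⟩
    rintro (_ | i) hi
    · simpa [hz0] using hq
    · exact hz i (by omega)

end LinearRelations

section SkewForms

variable {V : Type*} [AddCommGroup V] [Module ℂ V]

/-- A bilinear form is skew-symmetric. -/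
def IsSkewForm (a : V →ₗ[ℂ] V →ₗ[ℂ] ℂ) : Prop := ∀ x y, a x y = -a y x

theorem IsSkewForm.self_eq_zero {a : V →ₗ[ℂ] V →ₗ[ℂ] ℂ} (ha : IsSkewForm a) (x : V) :
    a x x = 0 :=
  self_eq_neg.1 (ha x x)

/-- A chain for a pair of skew-symmetric forms spans an isotropic subspace. -/
theorem IsSkewForm.chain_isotropic {α β : V →ₗ[ℂ] V →ₗ[ℂ] ℂ} (hα : IsSkewForm α)
    (hβ : IsSkewForm β) {k : ℕ} {x : ℕ → V} (hx : ∀ i, i + 1 < k → α (x (i + 1)) = β (x i))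
    {i j : ℕ} (hi : i < k) (hj : j < k) : β (x i) (x j) = 0 ∧ α (x i) (x j) = 0 := by
  have step : ∀ i j, i + 1 < k → j + 1 < k →
      β (x i) (x (j + 1)) = β (x (i + 1)) (x j) := fun i j hi hj => by
    rw [← hx i hi, hα, hx j hj, hβ, neg_neg]
  have slide : ∀ e i j, i + e < k → j + e < k → β (x i) (x (j + e)) = β (x (i + e)) (x j) := by
    intro e
    induction e with
    | zero => intros; rfl
    | succ e ih =>
      intro i j hi hj
      rw [← add_assoc, step _ _ (by omega) (by omega), ih _ _ (by omega) (by omega)]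
      congr 3; omega
  have key : ∀ i j, i ≤ j → j < k → β (x i) (x j) = 0 := by
    intro i j hij hj
    obtain ⟨e, rfl⟩ := Nat.exists_eq_add_of_le hij
    have h1 := slide e i i hj hj
    rw [hβ (x (i + e))] at h1
    exact self_eq_neg.1 h1
  have hβ0 : ∀ i j, i < k → j < k → β (x i) (x j) = 0 := by
    intro i j hi hj
    rcases le_total i j with h | h
    · exact key i j h hj
    · rw [hβ, key j i h hi, neg_zero]
  refine ⟨hβ0 i j hi hj, ?_⟩
  rcases i with _ | i
  · rcases j with _ | j
    · exact hα.self_eq_zero _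
    · rw [hα, hx j hj, hβ0 _ _ (by omega) hi, neg_zero]
  · rw [hx i hi, hβ0 _ _ (by omega) hj]

/-- A null chain of the pencil `a - λ b`: the coefficients of a (possibly infinite) power series
annihilated by the pencil. -/
def IsNullChain (a b : V →ₗ[ℂ] V →ₗ[ℂ] ℂ) (x : ℕ → V) : Prop :=
  a (x 0) = 0 ∧ ∀ i, a (x (i + 1)) = b (x i)

/-- The only finitely supported null chain is zero, i.e. the pencil has no polynomial null
vector. -/
def NoNullChain (a b : V →ₗ[ℂ] V →ₗ[ℂ] ℂ) : Prop :=
  ∀ x : ℕ → V, IsNullChain a b x → (∃ n, ∀ i, n ≤ i → x i = 0) → ∀ i, x i = 0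

theorem noNullChain_of_injective {a b : V →ₗ[ℂ] V →ₗ[ℂ] ℂ} (ha : Function.Injective a) :
    NoNullChain a b := by
  intro x hx _ i
  induction i with
  | zero => exact ha (by rw [hx.1, map_zero])
  | succ i ih => exact ha (by rw [hx.2, ih, map_zero, map_zero])

/-- A Jordan chain of length `k`. -/
def IsJordanChain (α β : V →ₗ[ℂ] V →ₗ[ℂ] ℂ) (k : ℕ) (s : ℕ → V) : Prop :=
  α (s 0) = 0 ∧ ∀ i, i + 1 < k → α (s (i + 1)) = β (s i)

theorem IsJordanChain.linearIndependent {α β : V →ₗ[ℂ] V →ₗ[ℂ] ℂ} (h : NoNullChain β α) {k : ℕ}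
    {s : ℕ → V} (hs : IsJordanChain α β k s) (hs0 : s 0 ≠ 0) :
    LinearIndependent ℂ (fun i : Fin k => s i) := by
  rw [Fintype.linearIndependent_iff]
  intro g hg
  set c : ℕ → ℂ := fun i => if hi : i < k then g ⟨i, hi⟩ else 0 with hc
  have hck : ∀ i, k ≤ i → c i = 0 := fun i hi => by simp [hc, not_lt.2 hi]
  set v : ℕ → V := fun j => ∑ l ∈ Finset.range k, c (l + j) • s l with hv
  have hv0 : v 0 = 0 := by
    simp only [hv, add_zero]
    rw [← hg, ← Fin.sum_univ_eq_sum_range (fun l => c l • s l)]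
    refine Finset.sum_congr rfl fun i _ => ?_
    simp [hc]
  have hstep : ∀ j, α (v j) = β (v (j + 1)) := by
    intro j
    rcases k with _ | k
    · simp [hv]
    · simp only [hv, map_sum, map_smul]
      rw [Finset.sum_range_succ', Finset.sum_range_succ, hs.1, hck (k + (j + 1)) (by omega)]
      simp only [smul_zero, zero_smul, add_zero]
      refine Finset.sum_congr rfl fun i hi => ?_
      rw [hs.2 i (by simpa using hi), add_right_comm, add_assoc]
  have hvz : ∀ j, v j = 0 := by
    have := h (fun j => v (j + 1)) ⟨by rw [← hstep, hv0, map_zero], fun i => (hstep _).symm⟩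
      ⟨k, fun i hi => Finset.sum_eq_zero fun l _ => by rw [hck _ (by omega), zero_smul]⟩
    rintro (_ | j)
    · exact hv0
    · exact this j
  have hcz : ∀ e i, i + e = k → ∀ j, i ≤ j → c j = 0 := by
    intro e
    induction e with
    | zero => intro i hi j hj; exact hck j (by omega)
    | succ e ih =>
      intro i hi j hj
      rcases hj.eq_or_lt with rfl | hj
      · have h1 := hvz i
        simp only [hv] at h1
        rw [Finset.sum_eq_single 0] at h1
        · simpa [hs0] using h1
        · intro l _ hl
          rw [ih (i + 1) (by omega) _ (by omega), zero_smul]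
        · simp only [Finset.mem_range]; omega
      · exact ih (i + 1) (by omega) j hj
  intro i
  simpa [hc] using hcz k 0 (by omega) i (Nat.zero_le _)

/-- Cancelling the superfluous entries of the Gram matrix of two Jordan chains that are paired
nontrivially. -/
theorem IsJordanChain.exists_dual_of_ne_zero {α β : V →ₗ[ℂ] V →ₗ[ℂ] ℂ} (hα : IsSkewForm α)
    (hβ : IsSkewForm β) {k : ℕ} {s t : ℕ → V} (hs : IsJordanChain α β k s)
    (ht : IsJordanChain α β k t) (hk : 0 < k) (hst : β (t (k - 1)) (s 0) ≠ 0) :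
    ∃ t' : ℕ → V, IsJordanChain α β k t' ∧
      ∀ i j, i < k → j < k → β (t' i) (s j) = if i + j + 1 = k then 1 else 0 := by
  have step : ∀ t, IsJordanChain α β k t → ∀ i j, i + 1 < k → j + 1 < k →
      β (t i) (s (j + 1)) = β (t (i + 1)) (s j) := fun t ht i j hi hj => by
    rw [← ht.2 i hi, hα, hs.2 j hj, hβ, neg_neg]
  have slide : ∀ t, IsJordanChain α β k t → ∀ e i j, i + e < k → j + e < k →
      β (t i) (s (j + e)) = β (t (i + e)) (s j) := by
    intro t ht e
    induction e with
    | zero => intros; rfl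
    | succ e ih =>
      intro i j hi hj
      rw [← add_assoc, step t ht _ _ (by omega) (by omega), ih _ _ (by omega) (by omega)]
      congr 3; omega
  have low : ∀ t, IsJordanChain α β k t → ∀ i j, i + j + 1 < k → β (t i) (s j) = 0 := by
    intro t ht i j hij
    have := slide t ht j i 0 (by omega) (by omega)
    rw [zero_add] at this
    rw [this, ← ht.2 _ hij, hα, hs.1, LinearMap.zero_apply, neg_zero]
  have main : ∀ r, ∃ t', IsJordanChain α β k t' ∧
      ∀ i j, i < k → j < k → i + j + 1 < k + (r + 1) →
        β (t' i) (s j) = if i + j + 1 = k then 1 else 0 := by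
    intro r
    induction r with
    | zero =>
      refine ⟨fun i => (β (t (k - 1)) (s 0))⁻¹ • t i,
        ⟨by simp [ht.1], fun i hi => by simp [ht.2 i hi]⟩, fun i j hi hj hij => ?_⟩
      split_ifs with h
      · have := slide t ht j i 0 (by omega) (by omega)
        rw [zero_add] at this
        rw [show i + j = k - 1 by omega] at this
        simp [this, hst]
      · simp [low t ht i j (by omega)]
    | succ r ih =>
      obtain ⟨t', ht', h⟩ := ih
      by_cases hr : k < r + 2
      · exact ⟨t', ht', fun i j hi hj hij => h i j hi hj (by omega)⟩
      push Not at hr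
      set κ := β (t' (k - 1)) (s (r + 1)) with hκ
      refine ⟨fun i => t' i - if i < r + 1 then 0 else κ • t' (i - (r + 1)), ⟨?_, ?_⟩, ?_⟩
      · simp [ht'.1]
      · intro i hi
        rcases lt_trichotomy (i + 1) (r + 1) with h1 | h1 | h1
        · simp only [if_pos h1, if_pos (show i < r + 1 by omega), ht'.2 i hi, sub_zero]
        · obtain rfl : i = r := by omega
          simp [ht'.1, ht'.2 i hi]
        · simp only [if_neg (show ¬ i + 1 < r + 1 by omega), if_neg (show ¬ i < r + 1 by omega)]
          have : i + 1 - (r + 1) = (i - (r + 1)) + 1 := by omega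
          simp [this, ht'.2 i hi, ht'.2 (i - (r + 1)) (by omega)]
      · intro i j hi hj hij
        by_cases h1 : i < r + 1
        · simp only [if_pos h1, sub_zero]
          by_cases h2 : i + j + 1 < k + (r + 1)
          · exact h i j hi hj h2
          · omega
        · simp only [if_neg h1, map_sub, map_smul, LinearMap.sub_apply, LinearMap.smul_apply,
            smul_eq_mul]
          by_cases h2 : i + j + 1 < k + (r + 1)
          · rw [h i j hi hj h2, low t' ht' (i - (r + 1)) j (by omega)]
            simp
          · rw [if_neg (by omega), h (i - (r + 1)) j (by omega) hj (by omega),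
              if_pos (by omega), mul_one, sub_eq_zero, hκ]
            have := slide t' ht' (k - 1 - i) i (r + 1) (by omega) (by omega)
            rw [show r + 1 + (k - 1 - i) = j by omega, show i + (k - 1 - i) = k - 1 by omega]
              at this
            exact this
  obtain ⟨t', ht', h⟩ := main k
  exact ⟨t', ht', fun i j hi hj => h i j hi hj (by omega)⟩

/-- A pencil without polynomial null vectors that degenerates at an eigenvalue contains a pair of
dual Jordan chains. -/
theorem exists_dual_jordanChains [FiniteDimensional ℂ V] {α β : V →ₗ[ℂ] V →ₗ[ℂ] ℂ}
    (hα : IsSkewForm α) (hβ : IsSkewForm β) (h : NoNullChain β α) {x : V} (hx : x ≠ 0)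
    (hαx : α x = 0) :
    ∃ k, 0 < k ∧ ∃ s t : ℕ → V, IsJordanChain α β k s ∧ IsJordanChain α β k t ∧
      ∀ i j, i < k → j < k → β (t i) (s j) = if i + j + 1 = k then 1 else 0 := by
  classical
  set p : ℕ → Prop := fun k => ∃ s : ℕ → V, IsJordanChain α β k s ∧ s 0 ≠ 0 with hp
  have hbd : ∀ k, p k → k ≤ Module.finrank ℂ V := by
    rintro k ⟨s, hs, hs0⟩
    simpa using (hs.linearIndependent h hs0).fintype_card_le_finrank
  have hp1 : p 1 := ⟨fun _ => x, ⟨hαx, fun i hi => by omega⟩, hx⟩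
  set k := Nat.findGreatest p (Module.finrank ℂ V) with hk
  have hk1 : 1 ≤ k := Nat.le_findGreatest (hbd 1 hp1) hp1
  have hpk : p k := Nat.findGreatest_spec (hbd 1 hp1) hp1
  have hmax : ¬ p (k + 1) := fun hcon => by
    have := Nat.le_findGreatest (hbd _ hcon) hcon
    omega
  obtain ⟨s, hs, hs0⟩ := hpk
  refine ⟨k, hk1, s, ?_⟩
  obtain ⟨y, hy, hys⟩ : ∃ y ∈ relIter α β ⊥ k, β y (s 0) ≠ 0 := by
    by_contra! hcon
    obtain ⟨z, hz0, hz, -⟩ := exists_chain_of_forall_mem_relIter α β ⊥ k (s 0) hcon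
    refine hmax ⟨z, ⟨by rw [hz0, hs.1], fun i hi => ?_⟩, by rwa [hz0]⟩
    ext v
    rw [hα, hz i (by omega), hβ, neg_neg]
  obtain ⟨c, hc0, hck, hc⟩ := exists_chain_of_mem_relIter hy
  rw [Submodule.mem_bot] at hck
  have ht : IsJordanChain α β k (fun i => c (k - 1 - i)) := by
    refine ⟨?_, fun i hi => ?_⟩
    · rw [hc _ (by omega), show k - 1 - 0 + 1 = k by omega, hck, map_zero]
    · rw [hc _ (by omega), show k - 1 - (i + 1) + 1 = k - 1 - i by omega]
  obtain ⟨t', ht', h'⟩ := hs.exists_dual_of_ne_zero hα hβ ht hk1 (by simpa [hc0] using hys)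
  exact ⟨t', hs, ht', h'⟩

end SkewForms

section Existence

variable {V : Type*} [AddCommGroup V] [Module ℂ V]

/-- The pair of forms `(a, b)` is given by the direct sum of the blocks in `l` in some basis. -/
def HasForm (a b : V →ₗ[ℂ] V →ₗ[ℂ] ℂ) (l : List SBlock) : Prop :=
  ∃ B : Module.Basis (Fin (sizeSum l)) ℂ V,
    ∀ i j, a (B i) (B j) = (spencilOfList l).1 i j ∧ b (B i) (B j) = (spencilOfList l).2 i j

/-- The pair of forms `(a, b)` is the orthogonal sum of the block `d` and a pair of forms on a
smaller space. -/
def SplitsOff (a b : V →ₗ[ℂ] V →ₗ[ℂ] ℂ) (d : SBlock) : Prop :=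
  ∃ Z : Submodule ℂ V, Module.finrank ℂ Z < Module.finrank ℂ V ∧
    ∀ l, HasForm (a.domRestrict₁₂ Z Z) (b.domRestrict₁₂ Z Z) l → HasForm a b (d :: l)

theorem splitsOff_of_dual [FiniteDimensional ℂ V] {a b : V →ₗ[ℂ] V →ₗ[ℂ] ℂ} (ha : IsSkewForm a)
    (hb : IsSkewForm b) {d : SBlock} (hd : 0 < d.size) (e : Fin d.size → V)
    (f : Fin d.size → V →ₗ[ℂ] ℂ)
    (hGram : ∀ i j, a (e i) (e j) = d.toPencil.1 i j ∧ b (e i) (e j) = d.toPencil.2 i j)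
    (hf : ∀ i j, f i (e j) = if i = j then 1 else 0)
    (horth : ∀ v, (∀ i, f i v = 0) → ∀ i, a (e i) v = 0 ∧ b (e i) v = 0) :
    SplitsOff a b d := by
  set Z : Submodule ℂ V := LinearMap.ker (LinearMap.pi f) with hZ
  have hmem : ∀ {v}, v ∈ Z ↔ ∀ i, f i v = 0 := fun {v} => by
    rw [hZ, LinearMap.mem_ker]
    exact funext_iff
  set g : (Fin d.size → ℂ) × Z →ₗ[ℂ] V :=
    (Fintype.linearCombination ℂ e).coprod Z.subtype with hg
  have hgapp : ∀ c z, g (c, z) = ∑ i, c i • e i + z := fun c z => by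
    simp [hg, Fintype.linearCombination_apply]
  have hfg : ∀ c z i, f i (g (c, z)) = c i := fun c z i => by
    rw [hgapp, map_add, hmem.1 z.2 i]
    simp [hf]
  have hbij : Function.Bijective g := by
    refine ⟨(injective_iff_map_eq_zero g).2 ?_, fun v => ?_⟩
    · rintro ⟨c, z⟩ h0
      obtain rfl : c = 0 := funext fun i => by rw [← hfg c z i, h0, map_zero]; rfl
      rw [hgapp] at h0
      simpa using h0
    · refine ⟨(fun i => f i v, ⟨v - ∑ i, f i v • e i, hmem.2 fun i => ?_⟩), ?_⟩
      · simp [hf]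
      · rw [hgapp]; simp
  set E := LinearEquiv.ofBijective g hbij with hE
  refine ⟨Z, ?_, ?_⟩
  · have := E.finrank_eq
    rw [Module.finrank_prod, Module.finrank_fin_fun] at this
    omega
  · rintro l ⟨B, hB⟩
    set B' := ((((Pi.basisFun ℂ (Fin d.size)).prod B).map E).reindex finSumFinEquiv) with hB'
    have hl : ∀ i, B' (Fin.castAdd _ i) = e i := fun i => by
      simp [hB', hE, hgapp, Pi.single_apply]
    have hr : ∀ i, B' (Fin.natAdd _ i) = B i := fun i => by
      simp [hB', hE, hgapp]
    refine ⟨B', fun i j => ?_⟩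
    change a (B' i) (B' j) = (Pencil.dsum d.toPencil (spencilOfList l)).1 i j ∧
      b (B' i) (B' j) = (Pencil.dsum d.toPencil (spencilOfList l)).2 i j
    have ho : ∀ i z, a (e i) (B z) = 0 ∧ b (e i) (B z) = 0 := fun i z =>
      horth _ (hmem.1 (B z).2) i
    refine Fin.addCases (fun i => ?_) (fun i => ?_) i <;>
      refine Fin.addCases (fun j => ?_) (fun j => ?_) j
    · simp [hl, Pencil.dsum, hGram]
    · simp [hl, hr, Pencil.dsum, ho]
    · rw [hl, hr, ha, hb, (ho j i).1, (ho j i).2]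
      simp [Pencil.dsum]
    · rw [hr, hr]
      have : a (B i) (B j) = (spencilOfList l).1 i j ∧ b (B i) (B j) = (spencilOfList l).2 i j :=
        hB i j
      simpa [Pencil.dsum] using this

section skewPair

variable {p q : ℕ} (X : Matrix (Fin p) (Fin q) ℂ)

@[simp] theorem skewPair_castAdd_castAdd (i j : Fin p) :
    skewPair X (Fin.castAdd q i) (Fin.castAdd q j) = 0 := by
  simp [skewPair]

@[simp] theorem skewPair_castAdd_natAdd (i : Fin p) (j : Fin q) :
    skewPair X (Fin.castAdd q i) (Fin.natAdd p j) = X i j := by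
  simp [skewPair]

@[simp] theorem skewPair_natAdd_castAdd (i : Fin q) (j : Fin p) :
    skewPair X (Fin.natAdd p i) (Fin.castAdd q j) = -X j i := by
  simp [skewPair]

@[simp] theorem skewPair_natAdd_natAdd (i j : Fin q) :
    skewPair X (Fin.natAdd p i) (Fin.natAdd p j) = 0 := by
  simp [skewPair]

theorem gram_append_eq_skewPair {a : V →ₗ[ℂ] V →ₗ[ℂ] ℂ} (ha : IsSkewForm a) {u : Fin p → V}
    {w : Fin q → V} (huu : ∀ i j, a (u i) (u j) = 0) (hww : ∀ i j, a (w i) (w j) = 0)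
    (huw : ∀ i j, a (u i) (w j) = X i j) (i j : Fin (p + q)) :
    a (Fin.append u w i) (Fin.append u w j) = skewPair X i j := by
  refine Fin.addCases (fun i => ?_) (fun i => ?_) i <;>
    refine Fin.addCases (fun j => ?_) (fun j => ?_) j
  · simp [huu]
  · simp [huw]
  · simp only [Fin.append_right, Fin.append_left, skewPair_natAdd_castAdd]
    rw [ha, huw]
  · simp [hww]

theorem append_dual {u : Fin p → V} {w : Fin q → V} {f : Fin p → V →ₗ[ℂ] ℂ}
    {g : Fin q → V →ₗ[ℂ] ℂ} (hfu : ∀ i j, f i (u j) = if i = j then 1 else 0)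
    (hfw : ∀ i j, f i (w j) = 0) (hgu : ∀ i j, g i (u j) = 0)
    (hgw : ∀ i j, g i (w j) = if i = j then 1 else 0) (i j : Fin (p + q)) :
    Fin.append f g i (Fin.append u w j) = if i = j then 1 else 0 := by
  refine Fin.addCases (fun i => ?_) (fun i => ?_) i <;>
    refine Fin.addCases (fun j => ?_) (fun j => ?_) j
  · simp [hfu]
  · simp [hfw, Fin.ext_iff]; omega
  · simp [hgu, Fin.ext_iff]; omega
  · simp [hgw]

end skewPair

/-- The Gram matrices and the dual family needed to split off a block built from two dual Jordan
chains, in the order `u i = t (k - 1 - i)`, `w j = s j`. -/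
theorem splitsOff_of_dual_jordanChains [FiniteDimensional ℂ V] {a b α β : V →ₗ[ℂ] V →ₗ[ℂ] ℂ}
    (ha : IsSkewForm a) (hb : IsSkewForm b) (hα : IsSkewForm α) (hβ : IsSkewForm β) {k : ℕ}
    (hk : 0 < k) {s t : ℕ → V} (hs : IsJordanChain α β k s) (ht : IsJordanChain α β k t)
    (hst : ∀ i j, i < k → j < k → β (t i) (s j) = if i + j + 1 = k then 1 else 0)
    {d : SBlock} (hd : d.size = k + k)
    (hblock : ∀ e : Fin (k + k) → V,
      (∀ i j, α (e i) (e j) = skewPair (Jmat k 0) i j ∧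
        β (e i) (e j) = skewPair (1 : Matrix (Fin k) (Fin k) ℂ) i j) →
      ∀ i j, a (e (i.cast hd)) (e (j.cast hd)) = d.toPencil.1 i j ∧
        b (e (i.cast hd)) (e (j.cast hd)) = d.toPencil.2 i j)
    (hab : ∀ x y, α x y = 0 → β x y = 0 → a x y = 0 ∧ b x y = 0) :
    SplitsOff a b d := by
  set u : Fin k → V := fun i => t (k - 1 - i) with hu
  set w : Fin k → V := fun j => s j with hw
  have huw : ∀ i j, β (u i) (w j) = if i = j then 1 else 0 := fun i j => by
    rw [hu, hw, hst _ _ (by omega) j.2]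
    refine if_congr ?_ rfl rfl
    rw [Fin.ext_iff]
    omega
  have htt : ∀ i j, i < k → j < k → β (t i) (t j) = 0 ∧ α (t i) (t j) = 0 := fun i j hi hj =>
    hα.chain_isotropic hβ ht.2 hi hj
  have hss : ∀ i j, i < k → j < k → β (s i) (s j) = 0 ∧ α (s i) (s j) = 0 := fun i j hi hj =>
    hα.chain_isotropic hβ hs.2 hi hj
  have hαu : ∀ i : Fin k, α (u i) = if h : (i : ℕ) + 1 < k then β (u ⟨i + 1, h⟩) else 0 := by
    intro i
    simp only [hu]
    split_ifs with h
    · rw [show k - 1 - (i : ℕ) = (k - 1 - (i + 1)) + 1 by omega, ht.2 _ (by omega)]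
    · rw [show k - 1 - (i : ℕ) = 0 by omega, ht.1]
  have hαw : ∀ i : Fin k, α (w i) =
      if h : (i : ℕ) = 0 then 0 else β (w ⟨i - 1, by omega⟩) := by
    rintro ⟨_ | i, hi⟩
    · simp [hw, hs.1]
    · simp [hw, hs.2 i hi]
  have hβe : ∀ i j, β (Fin.append u w i) (Fin.append u w j) =
      skewPair (1 : Matrix (Fin k) (Fin k) ℂ) i j :=
    gram_append_eq_skewPair _ hβ (fun i j => (htt _ _ (by omega) (by omega)).1)
      (fun i j => (hss _ _ i.2 j.2).1) (fun i j => by rw [huw, Matrix.one_apply])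
  have hαe : ∀ i j, α (Fin.append u w i) (Fin.append u w j) = skewPair (Jmat k 0) i j := by
    refine gram_append_eq_skewPair _ hα (fun i j => (htt _ _ (by omega) (by omega)).2)
      (fun i j => (hss _ _ i.2 j.2).2) (fun i j => ?_)
    rw [hαu, Jmat, Matrix.of_apply]
    split_ifs with h1 h2 h3
    · rw [huw, if_neg (by simp [Fin.ext_iff]; omega)]
    · rw [huw, if_pos (by simp [Fin.ext_iff]; omega)]
    · rw [huw, if_neg (by simp [Fin.ext_iff]; omega)]
    · rfl
    · omega
    · rfl
  refine splitsOff_of_dual ha hb (by omega) (fun i => Fin.append u w (i.cast hd))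
    (fun i => Fin.append (fun j => β.flip (w j)) (fun j => β (u j)) (i.cast hd))
    (hblock _ fun i j => ⟨hαe i j, hβe i j⟩) (fun i j => ?_) (fun v hv i => ?_)
  · rw [append_dual]
    · simp
    · intro i j
      rw [LinearMap.flip_apply, huw]
      simp [eq_comm]
    · exact fun i j => (hss _ _ j.2 i.2).1
    · exact fun i j => (htt _ _ (by omega) (by omega)).1
    · exact huw
  · have hv1 : ∀ j, β (w j) v = 0 := fun j => by
      have := hv ((Fin.castAdd k j).cast hd.symm)
      rw [hβ]
      simpa using this
    have hv2 : ∀ j, β (u j) v = 0 := fun j => by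
      have := hv ((Fin.natAdd k j).cast hd.symm)
      rwa [Fin.cast_cast, Fin.cast_eq_self, Fin.append_right] at this
    have key : ∀ i, α (Fin.append u w i) v = 0 ∧ β (Fin.append u w i) v = 0 := by
      refine fun i => Fin.addCases (fun i => ?_) (fun i => ?_) i
      · rw [Fin.append_left, hαu]
        split_ifs
        · exact ⟨hv2 _, hv2 _⟩
        · exact ⟨rfl, hv2 _⟩
      · rw [Fin.append_right, hαw]
        split_ifs
        · exact ⟨rfl, hv1 _⟩
        · exact ⟨hv1 _, hv1 _⟩
    exact hab _ _ (key _).1 (key _).2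

theorem skewPair_Jmat_apply (k : ℕ) (μ : ℂ) (i j : Fin (k + k)) :
    skewPair (Jmat k μ) i j =
      skewPair (Jmat k 0) i j + μ * skewPair (1 : Matrix (Fin k) (Fin k) ℂ) i j := by
  have h : ∀ i j : Fin k, Jmat k μ i j = Jmat k 0 i j + μ * (1 : Matrix (Fin k) (Fin k) ℂ) i j := by
    intro i j
    simp only [Jmat, Matrix.of_apply, Matrix.one_apply, Fin.ext_iff]
    split_ifs <;> first | omega | simp
  refine Fin.addCases (fun i => ?_) (fun i => ?_) i <;>
    refine Fin.addCases (fun j => ?_) (fun j => ?_) j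
  · simp
  · simp only [skewPair_castAdd_natAdd, h]
  · simp only [skewPair_natAdd_castAdd, h]
    ring
  · simp only [skewPair_natAdd_natAdd, mul_zero, add_zero]

theorem splitsOff_H [FiniteDimensional ℂ V] [Nontrivial V] {a b : V →ₗ[ℂ] V →ₗ[ℂ] ℂ}
    (ha : IsSkewForm a) (hb : IsSkewForm b) (hinj : Function.Injective b) :
    ∃ d : SBlock, d.valid ∧ SplitsOff a b d := by
  set E : V ≃ₗ[ℂ] Module.Dual ℂ V :=
    LinearMap.linearEquivOfInjective b hinj Subspace.dual_finrank_eq.symm with hE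
  obtain ⟨μ, hμ⟩ := Module.End.exists_eigenvalue (E.symm.toLinearMap.comp a)
  obtain ⟨x, hx⟩ := hμ.exists_hasEigenvector
  have hax : (a - μ • b) x = 0 := by
    have h1 : E.symm (a x) = μ • x := hx.apply_eq_smul
    rw [LinearEquiv.symm_apply_eq, map_smul] at h1
    rw [LinearMap.sub_apply, h1, LinearMap.smul_apply, sub_eq_zero]
    rfl
  have hα : IsSkewForm (a - μ • b) := fun x y => by
    simp only [LinearMap.sub_apply, LinearMap.smul_apply, smul_eq_mul]
    rw [ha x y, hb x y]
    ring
  have hadd : ∀ x y, a x y = (a - μ • b) x y + μ * b x y := fun x y => by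
    simp
  obtain ⟨k, hk, s, t, hs, ht, hst⟩ :=
    exists_dual_jordanChains hα hb (noNullChain_of_injective hinj) hx.2 hax
  refine ⟨SBlock.H k μ, hk, splitsOff_of_dual_jordanChains ha hb hα hb hk hs ht hst rfl
    (fun e he i j => ⟨?_, (he i j).2⟩) (fun x y h1 h2 => ⟨by rw [hadd, h1, h2]; simp, h2⟩)⟩
  rw [hadd]
  refine (congrArg₂ (· + μ * ·) (he i j).1 (he i j).2).trans ?_
  exact (skewPair_Jmat_apply k μ i j).symm

theorem splitsOff_K [FiniteDimensional ℂ V] {a b : V →ₗ[ℂ] V →ₗ[ℂ] ℂ}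
    (ha : IsSkewForm a) (hb : IsSkewForm b) (hnull : NoNullChain a b)
    (hinj : ¬ Function.Injective b) :
    ∃ d : SBlock, d.valid ∧ SplitsOff a b d := by
  obtain ⟨x, hbx, hx⟩ : ∃ x, b x = 0 ∧ x ≠ 0 := by
    by_contra! h
    exact hinj ((injective_iff_map_eq_zero b).2 h)
  obtain ⟨k, hk, s, t, hs, ht, hst⟩ := exists_dual_jordanChains hb ha hnull hx hbx
  exact ⟨SBlock.K k, hk, splitsOff_of_dual_jordanChains ha hb hb ha hk hs ht hst rfl
    (fun e he i j => ⟨(he i j).2, (he i j).1⟩) (fun x y h1 h2 => ⟨h2, h1⟩)⟩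

theorem splitsOff_M [FiniteDimensional ℂ V] {a b : V →ₗ[ℂ] V →ₗ[ℂ] ℂ}
    (ha : IsSkewForm a) (hb : IsSkewForm b) (hnull : ¬ NoNullChain a b) :
    ∃ d : SBlock, d.valid ∧ SplitsOff a b d := by
  classical
  have hex : ∃ m, ∃ x : ℕ → V, IsNullChain a b x ∧ (∀ i, m < i → x i = 0) ∧ ∃ i, x i ≠ 0 := by
    simp only [NoNullChain] at hnull
    push Not at hnull
    obtain ⟨x, hx, ⟨n, hn⟩, i, hi⟩ := hnull
    exact ⟨n, x, hx, fun i hi => hn i hi.le, i, hi⟩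
  set m := Nat.find hex with hm
  obtain ⟨x, hx, hxm, i₀, hi₀⟩ := Nat.find_spec hex
  have hmin : ∀ n < m, ∀ x : ℕ → V, IsNullChain a b x → (∀ i, n < i → x i = 0) → ∀ i, x i = 0 :=
    fun n hn x hx hxn i => by_contra fun hi => Nat.find_min hex hn ⟨x, hx, hxn, i, hi⟩
  have hx0 : x 0 ≠ 0 := by
    intro h0
    have hsh : IsNullChain a b fun i => x (i + 1) := ⟨by rw [hx.2, h0, map_zero], fun i => hx.2 _⟩
    obtain _ | i := i₀
    · exact hi₀ h0
    · rcases Nat.eq_zero_or_pos m with h | h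
      · exact hi₀ (hxm _ (by omega))
      · exact hi₀ (hmin (m - 1) (by omega) _ hsh (fun i hi => hxm _ (by omega)) i)
  refine ⟨SBlock.M m, trivial, ?_⟩
  have hbm : b (x m) = 0 := by rw [← hx.2, hxm _ (Nat.lt_succ_self m), map_zero]
  obtain ⟨g, hg⟩ : ∃ g : V →ₗ[ℂ] ℂ, m = 0 → g (x 0) = 1 := by
    obtain ⟨g, hg⟩ := Module.Projective.exists_dual_ne_zero ℂ hx0
    exact ⟨(g (x 0))⁻¹ • g, fun _ => by simp [hg]⟩
  obtain ⟨y, hy, hy0⟩ : ∃ y : ℕ → V, (∀ i, i + 1 < m → b (y (i + 1)) = a (y i)) ∧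
      (0 < m → b (y 0) (x 0) = 1) := by
    rcases Nat.eq_zero_or_pos m with h | h
    · exact ⟨0, fun i hi => by omega, fun _ => by omega⟩
    obtain ⟨z, hz, hzx⟩ : ∃ z ∈ relIter a b ⊤ (m - 1), b z (x 0) ≠ 0 := by
      by_contra! hcon
      obtain ⟨z, hz0, hz, hzT⟩ := exists_chain_of_forall_mem_relIter a b ⊤ (m - 1) (x 0) hcon
      refine hx0 ?_
      have := hmin (m - 1) (by omega) (fun i => if i ≤ m - 1 then z i else 0) ⟨?_, fun i => ?_⟩
        (fun i hi => if_neg (by omega)) 0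
      · simpa [hz0] using this
      · simp [hz0, hx.1]
      · rcases lt_trichotomy i (m - 1) with h1 | h1 | h1
        · dsimp only
          rw [if_pos (by omega), if_pos (by omega)]
          ext v
          rw [ha, hz i h1, hb, neg_neg]
        · dsimp only
          rw [if_neg (by omega), if_pos (by omega), map_zero, h1]
          ext v
          rw [hb, hzT v trivial]
          simp
        · dsimp only
          rw [if_neg (by omega), if_neg (by omega), map_zero, map_zero]
    obtain ⟨c, hc0, -, hc⟩ := exists_chain_of_mem_relIter hz
    refine ⟨fun i => (b z (x 0))⁻¹ • c i, fun i hi => ?_, fun _ => ?_⟩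
    · rw [map_smul, map_smul, hc i (by omega)]
    · simp [hc0, hzx]
  have hyy : ∀ i j, i < m → j < m → a (y i) (y j) = 0 ∧ b (y i) (y j) = 0 := fun i j hi hj =>
    hb.chain_isotropic ha hy hi hj
  have hxx : ∀ i j, i < m + 1 → j < m + 1 → b (x i) (x j) = 0 ∧ a (x i) (x j) = 0 :=
    fun i j hi hj => ha.chain_isotropic hb (fun i _ => hx.2 i) hi hj
  have hab : ∀ i j, a (y i) (x (j + 1)) = b (y i) (x j) := fun i j => by
    rw [ha, hx.2, hb, neg_neg]
  have hslide : ∀ e i j, i + e < m → b (y (i + e)) (x (j + e)) = b (y i) (x j) := by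
    intro e
    induction e with
    | zero => intros; rfl
    | succ e ih =>
      intro i j hi
      rw [← ih i j (by omega), ← add_assoc, ← add_assoc, hy _ (by omega), hab]
  have hbyx : ∀ i j, i < m → j ≤ m → b (y i) (x j) = if i = j then 1 else 0 := by
    intro i j hi hj
    rcases lt_trichotomy i j with h | h | h
    · rw [if_neg h.ne]
      have := hslide (m - j) i j (by omega)
      rw [← this, show j + (m - j) = m by omega, hb, hbm]
      simp
    · subst h
      have := hslide i 0 0 (by omega)
      rw [zero_add] at this
      rw [this, hy0 (by omega), if_pos rfl]
    · rw [if_neg h.ne']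
      have := hslide j (i - j) 0 (by omega)
      rw [show i - j + j = i by omega, zero_add] at this
      rw [this, show i - j = (i - j - 1) + 1 by omega, hy _ (by omega), ha, hx.1]
      simp
  have hayx : ∀ i j, i < m → j ≤ m → a (y i) (x j) = if j = i + 1 then 1 else 0 := by
    rintro i (_ | j) hi hj
    · rw [ha, hx.1]; simp
    · rw [hab, hbyx i j hi (by omega)]
      simp [eq_comm]
  set f : Fin (m + 1) → V →ₗ[ℂ] ℂ := fun j =>
    if h : m = 0 then g else if (j : ℕ) = 0 then b (y 0) else a (y (j - 1)) with hf
  refine splitsOff_of_dual ha hb (Nat.succ_pos _) (Fin.append (fun i : Fin m => y i)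
    (fun j : Fin (m + 1) => x j)) (Fin.append (fun i : Fin m => b.flip (x i)) f)
    (fun i j => ⟨?_, ?_⟩) (append_dual ?_ ?_ ?_ ?_) ?_
  · exact gram_append_eq_skewPair (Fmat m) ha (fun i j => (hyy _ _ i.2 j.2).1)
      (fun i j => (hxx _ _ i.2 j.2).2) (fun i j => hayx _ _ i.2 (by omega)) i j
  · exact gram_append_eq_skewPair (Gmat m) hb (fun i j => (hyy _ _ i.2 j.2).2)
      (fun i j => (hxx _ _ i.2 j.2).1)
      (fun i j => by rw [hbyx _ _ i.2 (by omega)]; simp [Gmat, eq_comm]) i j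
  · intro i j
    rw [LinearMap.flip_apply, hbyx _ _ j.2 (by omega)]
    simp [Fin.ext_iff, eq_comm]
  · exact fun i j => (hxx _ _ j.2 (by omega)).1
  · intro i j
    have := j.2
    rw [hf]
    dsimp only
    split_ifs
    · omega
    · exact (hyy _ _ (by omega) j.2).2
    · exact (hyy _ _ (by omega) j.2).1
  · intro i j
    rw [hf]
    dsimp only
    simp only [Fin.ext_iff]
    by_cases h1 : m = 0
    · rw [dif_pos h1, show (j : ℕ) = 0 by omega, hg h1, if_pos (by omega)]
    · rw [dif_neg h1]
      by_cases h2 : (i : ℕ) = 0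
      · rw [if_pos h2, hbyx _ _ (by omega) (by omega), h2]
      · rw [if_neg h2, hayx _ _ (by omega) (by omega)]
        exact if_congr (by omega) rfl rfl
  · intro v hv
    have hbx : ∀ j, j ≤ m → b (x j) v = 0 := fun j hj => by
      rcases hj.eq_or_lt with rfl | hj
      · rw [hbm, LinearMap.zero_apply]
      · have := hv (Fin.castAdd (m + 1) ⟨j, hj⟩)
        rw [Fin.append_left, LinearMap.flip_apply] at this
        rw [hb, this, neg_zero]
    have hax : ∀ j, j ≤ m → a (x j) v = 0 := by
      rintro (_ | j) hj
      · rw [hx.1, LinearMap.zero_apply]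
      · rw [hx.2, hbx j (by omega)]
    have hay : ∀ i, i < m → a (y i) v = 0 := fun i hi => by
      have := hv (Fin.natAdd m ⟨i + 1, by omega⟩)
      rw [Fin.append_right] at this
      simpa [hf, show m ≠ 0 by omega] using this
    have hby : ∀ i, i < m → b (y i) v = 0 := by
      rintro (_ | i) hi
      · have := hv (Fin.natAdd m ⟨0, by omega⟩)
        rw [Fin.append_right] at this
        simpa [hf, show m ≠ 0 by omega] using this
      · rw [hy i hi, hay i (by omega)]
    refine fun i => Fin.addCases (fun i => ?_) (fun i => ?_) i
    · rw [Fin.append_left]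
      exact ⟨hay _ i.2, hby _ i.2⟩
    · rw [Fin.append_right]
      exact ⟨hax _ (by omega), hbx _ (by omega)⟩

theorem exists_splitsOff [FiniteDimensional ℂ V] [Nontrivial V] {a b : V →ₗ[ℂ] V →ₗ[ℂ] ℂ}
    (ha : IsSkewForm a) (hb : IsSkewForm b) : ∃ d : SBlock, d.valid ∧ SplitsOff a b d := by
  by_cases hnull : NoNullChain a b
  · by_cases hinj : Function.Injective b
    · exact splitsOff_H ha hb hinj
    · exact splitsOff_K ha hb hnull hinj
  · exact splitsOff_M ha hb hnull

theorem exists_hasForm {V : Type*} [AddCommGroup V] [Module ℂ V] [FiniteDimensional ℂ V]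
    (a b : V →ₗ[ℂ] V →ₗ[ℂ] ℂ) (ha : IsSkewForm a) (hb : IsSkewForm b) :
    ∃ l : List SBlock, (∀ d ∈ l, d.valid) ∧ HasForm a b l := by
  induction hn : Module.finrank ℂ V using Nat.strong_induction_on generalizing V with
  | _ n ih =>
  rcases subsingleton_or_nontrivial V with hV | hV
  · have : IsEmpty (Fin (sizeSum [])) := inferInstanceAs (IsEmpty (Fin 0))
    exact ⟨[], by simp, Module.Basis.empty V, fun i => i.elim0⟩
  · obtain ⟨d, hd, Z, hZ, hsplit⟩ := exists_splitsOff ha hb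
    obtain ⟨l, hl, hform⟩ := ih _ (hn ▸ hZ) (a.domRestrict₁₂ Z Z) (b.domRestrict₁₂ Z Z)
      (fun x y => ha x y) (fun x y => hb x y) rfl
    exact ⟨d :: l, by simpa using ⟨hd, hl⟩, hsplit l hform⟩

end Existence

theorem isSkewForm_toLinearMap₂' {n : ℕ} {A : Matrix (Fin n) (Fin n) ℂ} (hA : Aᵀ = -A) :
    IsSkewForm (Matrix.toLinearMap₂' ℂ A) := by
  intro x y
  rw [Matrix.toLinearMap₂'_apply', Matrix.toLinearMap₂'_apply', ← dotProduct_comm,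
    ← Matrix.vecMul_transpose, ← Matrix.dotProduct_mulVec, hA, Matrix.neg_mulVec, dotProduct_neg]

theorem exists_representsC {n : ℕ} (P : Pencil n n) (hP : Pencil.IsSkew P) :
    ∃ s : Multiset SBlock, RepresentsC P s := by
  obtain ⟨l, hl, B, hB⟩ := exists_hasForm _ _ (isSkewForm_toLinearMap₂' hP.1)
    (isSkewForm_toLinearMap₂' hP.2)
  have h : sizeSum l = n := by
    have := Module.finrank_eq_card_basis B
    simpa using this.symm
  subst h
  refine ⟨l, by simpa using hl, l, rfl, rfl, ?_⟩
  set E : Matrix (Fin (sizeSum l)) (Fin (sizeSum l)) ℂ := (Pi.basisFun ℂ _).toMatrix B with hE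
  have hunit : IsUnit E := by
    have := (Pi.basisFun ℂ (Fin (sizeSum l))).invertibleToMatrix B
    exact isUnit_of_invertible E
  have hgram : ∀ A C : Matrix (Fin (sizeSum l)) (Fin (sizeSum l)) ℂ,
      (∀ i j, Matrix.toLinearMap₂' ℂ A (B i) (B j) = C i j) → E⁻¹ᵀ * C * E⁻¹ = A := by
    intro A C hAC
    have : C = Eᵀ * A * E := by
      ext i j
      rw [← hAC, Matrix.toLinearMap₂'_apply', Matrix.mul_assoc, Matrix.mul_apply]
      rfl
    have hdet := (Matrix.isUnit_iff_isUnit_det E).1 hunit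
    rw [this, Matrix.mul_assoc, Matrix.mul_assoc, Matrix.mul_nonsing_inv _ hdet, Matrix.mul_one,
      ← Matrix.mul_assoc, ← Matrix.transpose_mul, Matrix.mul_nonsing_inv _ hdet,
      Matrix.transpose_one, Matrix.one_mul]
  exact ⟨E⁻¹, by simpa using hunit, hgram _ _ fun i j => (hB i j).1, hgram _ _ fun i j => (hB i j).2⟩

section RelRank

variable {K V W V' W' : Type*} [Field K]
  [AddCommGroup V] [Module K V] [AddCommGroup W] [Module K W]
  [AddCommGroup V'] [Module K V'] [AddCommGroup W'] [Module K W']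

/-- The starting subspace of the iteration defining `relRank`: everything or zero. -/
def relStart (K V : Type*) [Field K] [AddCommGroup V] [Module K V] (t : Bool) : Submodule K V :=
  if t then ⊤ else ⊥

/-- The dimension of the part of `ker β` which is reached by `k` iterations of the linear relation
`α x = β y`, starting from the whole space or from zero. -/
def relRank (t : Bool) (α β : V →ₗ[K] W) (k : ℕ) : ℕ :=
  Module.finrank K ↥(LinearMap.ker β ⊓ relIter α β (relStart K V t) k)

theorem apply_mem_relIter_iff {α β : V →ₗ[K] W} {α' β' : V' →ₗ[K] W'} (e : V ≃ₗ[K] V')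
    (h : ∀ x y, β' (e y) = α' (e x) ↔ β y = α x) {Y : Submodule K V} {Y' : Submodule K V'}
    (hY : ∀ x, e x ∈ Y' ↔ x ∈ Y) (k : ℕ) (x : V) :
    e x ∈ relIter α' β' Y' k ↔ x ∈ relIter α β Y k := by
  induction k generalizing x with
  | zero => exact hY x
  | succ k ih =>
    rw [mem_relIter_succ, mem_relIter_succ, e.surjective.exists]
    simp only [ih, h]

theorem relRank_eq_of_equiv {α β : V →ₗ[K] W} {α' β' : V' →ₗ[K] W'} (e : V ≃ₗ[K] V')
    (h : ∀ x y, β' (e y) = α' (e x) ↔ β y = α x) (t : Bool) (k : ℕ) :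
    relRank t α' β' k = relRank t α β k := by
  rw [relRank, relRank, ← e.finrank_map_eq]
  refine congrArg (fun p : Submodule K V' => Module.finrank K p) (Submodule.ext fun x => ?_)
  obtain ⟨x, rfl⟩ := e.surjective x
  have h0 : β' (e x) = 0 ↔ β x = 0 := by simpa using h 0 x
  have hY : ∀ x, e x ∈ relStart K V' t ↔ x ∈ relStart K V t := fun x => by
    cases t <;> simp [relStart]
  simp [h0, apply_mem_relIter_iff e h hY]

theorem mk_mem_relIter_prodMap {α β : V →ₗ[K] W} {α' β' : V' →ₗ[K] W'} {Y : Submodule K V}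
    {Y' : Submodule K V'} (k : ℕ) (x : V) (x' : V') :
    (x, x') ∈ relIter (α.prodMap α') (β.prodMap β') (Y.prod Y') k ↔
      x ∈ relIter α β Y k ∧ x' ∈ relIter α' β' Y' k := by
  induction k generalizing x x' with
  | zero => rfl
  | succ k ih =>
    simp only [mem_relIter_succ, Prod.exists, ih, LinearMap.prodMap_apply, Prod.mk.injEq]
    constructor
    · rintro ⟨y, y', ⟨hy, hy'⟩, h, h'⟩
      exact ⟨⟨y, hy, h⟩, y', hy', h'⟩
    · rintro ⟨⟨y, hy, h⟩, y', hy', h'⟩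
      exact ⟨y, y', ⟨hy, hy'⟩, h, h'⟩

theorem finrank_submodule_prod [FiniteDimensional K V] [FiniteDimensional K V']
    (p : Submodule K V) (q : Submodule K V') :
    Module.finrank K ↥(p.prod q) = Module.finrank K p + Module.finrank K q := by
  rw [← Module.finrank_prod, ← LinearMap.finrank_range_of_inj (f := p.subtype.prodMap q.subtype)
    (Prod.map_injective.2 ⟨p.subtype_injective, q.subtype_injective⟩), LinearMap.range_prodMap,
    Submodule.range_subtype, Submodule.range_subtype]

theorem relRank_prodMap [FiniteDimensional K V] [FiniteDimensional K V'] (t : Bool)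
    (α β : V →ₗ[K] W) (α' β' : V' →ₗ[K] W') (k : ℕ) :
    relRank t (α.prodMap α') (β.prodMap β') k = relRank t α β k + relRank t α' β' k := by
  have hY : relStart K (V × V') t = (relStart K V t).prod (relStart K V' t) := by
    cases t <;> simp [relStart]
  rw [relRank, relRank, relRank, ← finrank_submodule_prod]
  refine congrArg (fun p : Submodule K (V × V') => Module.finrank K p)
    (Submodule.ext fun ⟨x, x'⟩ => ?_)
  rw [hY]
  simp only [Submodule.mem_inf, Submodule.mem_prod, mk_mem_relIter_prodMap, LinearMap.mem_ker,
    LinearMap.prodMap_apply, Prod.mk_eq_zero]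
  tauto

theorem relRank_eq_zero_of_injective {α β : V →ₗ[K] W} (h : Function.Injective β) (t : Bool)
    (k : ℕ) : relRank t α β k = 0 := by
  rw [relRank, LinearMap.ker_eq_bot.2 h, bot_inf_eq, finrank_bot]

theorem relRank_false_eq_zero_of_injective {α β : V →ₗ[K] W} (h : Function.Injective α)
    (k : ℕ) : relRank false α β k = 0 := by
  have hbot : relIter α β ⊥ k = ⊥ := by
    induction k with
    | zero => rfl
    | succ k ih => rw [relIter, ih, Submodule.map_bot, Submodule.comap_bot, LinearMap.ker_eq_bot.2 h]
  rw [relRank, relStart, if_neg Bool.false_ne_true, hbot, inf_bot_eq, finrank_bot]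

theorem relRank_true_of_surjective [FiniteDimensional K V] {α β : V →ₗ[K] W}
    (h : Function.Surjective β) (k : ℕ) :
    relRank true α β k + Module.finrank K W = Module.finrank K V := by
  have htop : relIter α β ⊤ k = ⊤ := by
    induction k with
    | zero => rfl
    | succ k ih =>
      rw [relIter, ih, Submodule.map_top, LinearMap.range_eq_top.2 h, Submodule.comap_top]
  rw [relRank, relStart, if_pos rfl, htop, inf_top_eq, add_comm, ← β.finrank_range_add_finrank_ker,
    LinearMap.range_eq_top.2 h, finrank_top]

end RelRank

section MatRank

variable {m n m' n' : Type*} [Fintype n] [Fintype n']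

/-- The number `relRank` for the linear maps given by two matrices. -/
def matRank (t : Bool) (A B : Matrix m n ℂ) (k : ℕ) : ℕ :=
  relRank t A.mulVecLin B.mulVecLin k

theorem matRank_mul_mul [Fintype m] [DecidableEq m] [DecidableEq n] {S : Matrix m m ℂ}
    {R : Matrix n n ℂ} (hS : IsUnit S) (hR : IsUnit R) (t : Bool) (A B : Matrix m n ℂ) (k : ℕ) :
    matRank t (S * A * R) (S * B * R) k = matRank t A B k := by
  refine (relRank_eq_of_equiv (LinearEquiv.ofBijective R.mulVecLin
    ⟨Matrix.mulVec_injective_of_isUnit hR, Matrix.mulVec_surjective_iff_isUnit.2 hR⟩)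
    (fun x y => ?_) t k).symm
  simp only [Matrix.mulVecLin_apply, ← Matrix.mulVec_mulVec]
  exact (Matrix.mulVec_injective_of_isUnit hS).eq_iff.symm

theorem matRank_neg_neg (t : Bool) (A B : Matrix m n ℂ) (k : ℕ) :
    matRank t (-A) (-B) k = matRank t A B k :=
  relRank_eq_of_equiv (LinearEquiv.refl ℂ _) (fun x y => by simp) t k

theorem matRank_submatrix (σ : m' ≃ m) (τ : n' ≃ n) (t : Bool) (A B : Matrix m n ℂ) (k : ℕ) :
    matRank t (A.submatrix σ τ) (B.submatrix σ τ) k = matRank t A B k := by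
  refine (relRank_eq_of_equiv (LinearEquiv.funCongrLeft ℂ ℂ τ.symm) (fun x y => ?_) t k).symm
  simp only [Matrix.mulVecLin_apply, Matrix.submatrix_mulVec_equiv]
  exact σ.surjective.injective_comp_right.eq_iff.symm

theorem matRank_fromBlocks (t : Bool) (A B : Matrix m n ℂ) (C D : Matrix m' n' ℂ) (k : ℕ) :
    matRank t (fromBlocks A 0 0 C) (fromBlocks B 0 0 D) k = matRank t A B k + matRank t C D k := by
  rw [matRank, matRank, matRank, ← relRank_prodMap]
  refine (relRank_eq_of_equiv (LinearEquiv.sumArrowLequivProdArrow n n' ℂ ℂ) (fun x y => ?_) t k).symm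
  simp only [Matrix.mulVecLin_apply, Matrix.fromBlocks_mulVec, Matrix.zero_mulVec, add_zero,
    zero_add, LinearMap.prodMap_apply, Prod.ext_iff, Sum.elim_eq_iff]
  rfl

end MatRank

theorem matRank_skewPair {p q : ℕ} (t : Bool) (X Y : Matrix (Fin p) (Fin q) ℂ) (k : ℕ) :
    matRank t (skewPair X) (skewPair Y) k = matRank t X Y k + matRank t Xᵀ Yᵀ k := by
  rw [← matRank_neg_neg t Xᵀ, ← matRank_fromBlocks, skewPair, skewPair, matRank_submatrix,
    ← matRank_submatrix (Equiv.refl _) (Equiv.sumComm _ _)]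
  simp [Matrix.fromBlocks_submatrix_sum_swap_right]

namespace Pencil

/-- The pencil `A - λ B` seen from the eigenvalue `o ∈ ℂ ∪ {∞}`, where `none` encodes `∞`. -/
def probe {m n : ℕ} : Option ℂ → Pencil m n → Pencil m n
  | some μ, P => (P.2, P.1 - μ • P.2)
  | none, P => P

/-- The number `relRank` of a pencil seen from an eigenvalue. -/
def probeRank {m n : ℕ} (o : Option ℂ) (t : Bool) (k : ℕ) (P : Pencil m n) : ℕ :=
  matRank t (probe o P).1 (probe o P).2 k

theorem Congruent.probeRank_eq {n : ℕ} {P Q : Pencil n n} (h : Congruent P Q) (o : Option ℂ)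
    (t : Bool) (k : ℕ) : probeRank o t k P = probeRank o t k Q := by
  obtain ⟨S, hS, h1, h2⟩ := h
  have hS' : IsUnit Sᵀ := (Matrix.isUnit_transpose S).2 hS
  cases o with
  | none => rw [probeRank, probeRank, probe, probe, ← h1, ← h2, matRank_mul_mul hS' hS]
  | some μ =>
    have h3 : Sᵀ * (P.1 - μ • P.2) * S = Q.1 - μ • Q.2 := by
      rw [← h1, ← h2, Matrix.mul_sub, Matrix.sub_mul, Matrix.mul_smul, Matrix.smul_mul]
    rw [probeRank, probeRank, probe, probe, ← h3, ← h2, matRank_mul_mul hS' hS]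

theorem probeRank_dsum {m n p q : ℕ} (o : Option ℂ) (t : Bool) (k : ℕ) (P : Pencil m n)
    (Q : Pencil p q) : probeRank o t k (dsum P Q) = probeRank o t k P + probeRank o t k Q := by
  cases o with
  | none => simp only [probeRank, probe, dsum, matRank_submatrix, matRank_fromBlocks]
  | some μ =>
    have h : (dsum P Q).1 - μ • (dsum P Q).2 = (fromBlocks (P.1 - μ • P.2) 0 0
        (Q.1 - μ • Q.2)).submatrix finSumFinEquiv.symm finSumFinEquiv.symm := by
      ext i j
      simp only [dsum, Matrix.sub_apply, Matrix.smul_apply, Matrix.submatrix_apply]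
      rcases finSumFinEquiv.symm i with i | i <;> rcases finSumFinEquiv.symm j with j | j <;> simp
    simp only [probeRank, probe, h]
    simp only [dsum, matRank_submatrix, matRank_fromBlocks]

theorem probeRank_spencilOfList (o : Option ℂ) (t : Bool) (k : ℕ) (l : List SBlock) :
    probeRank o t k (spencilOfList l) = (l.map fun d => probeRank o t k d.toPencil).sum := by
  induction l with
  | nil =>
    have : Subsingleton (Fin (sizeSum []) → ℂ) := inferInstanceAs (Subsingleton (Fin 0 → ℂ))
    exact relRank_eq_zero_of_injective (Function.injective_of_subsingleton _) t k
  | cons d l ih =>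
    refine (probeRank_dsum o t k d.toPencil (spencilOfList l)).trans ?_
    rw [ih, List.map_cons, List.sum_cons]

end Pencil

theorem finrank_eq_one_of_mem_iff {n : Type*} [Fintype n] [DecidableEq n] (i₀ : n)
    (p : Submodule ℂ (n → ℂ)) (h : ∀ x, x ∈ p ↔ ∀ i, i ≠ i₀ → x i = 0) :
    Module.finrank ℂ p = 1 := by
  have hp : p = ℂ ∙ (Pi.single i₀ (1 : ℂ) : n → ℂ) := by
    ext x
    rw [h, Submodule.mem_span_singleton]
    constructor
    · intro hx
      refine ⟨x i₀, funext fun i => ?_⟩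
      rcases eq_or_ne i i₀ with rfl | hi
      · simp
      · simp [hx i hi, hi]
    · rintro ⟨c, rfl⟩ i hi
      simp [hi]
  rw [hp, finrank_span_singleton]
  simp

theorem Fmat_mulVec_apply {m : ℕ} (x : Fin (m + 1) → ℂ) (i : Fin m) :
    (Fmat m *ᵥ x) i = x i.succ := by
  rw [Matrix.mulVec, dotProduct, Finset.sum_eq_single i.succ]
  · simp [Fmat]
  · intro j _ hj
    simp [Fmat, show (j : ℕ) ≠ i + 1 from fun h => hj (Fin.ext h)]
  · simp

theorem Gmat_mulVec_apply {m : ℕ} (x : Fin (m + 1) → ℂ) (i : Fin m) :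
    (Gmat m *ᵥ x) i = x i.castSucc := by
  rw [Matrix.mulVec, dotProduct, Finset.sum_eq_single i.castSucc]
  · simp [Gmat]
  · intro j _ hj
    simp [Gmat, show (j : ℕ) ≠ i from fun h => hj (Fin.ext h)]
  · simp

theorem Jmat_zero_mulVec_apply {h : ℕ} (x : Fin h → ℂ) (i : Fin h) :
    (Jmat h 0 *ᵥ x) i = if hi : (i : ℕ) + 1 < h then x ⟨i + 1, hi⟩ else 0 := by
  have hJ : ∀ j, Jmat h 0 i j = if (j : ℕ) = i + 1 then 1 else 0 := fun j => by
    simp only [Jmat, Matrix.of_apply]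
    split_ifs <;> first | rfl | omega
  simp only [Matrix.mulVec, dotProduct, hJ]
  split_ifs with hi
  · rw [Finset.sum_eq_single ⟨i + 1, hi⟩]
    · simp
    · intro j _ hj
      simp [show (j : ℕ) ≠ i + 1 from fun h => hj (Fin.ext h)]
    · simp
  · exact Finset.sum_eq_zero fun j _ => by rw [if_neg (by omega), zero_mul]

theorem transpose_mulVec_injective {m n : Type*} [Fintype m] [Fintype n] {A : Matrix m n ℂ}
    (hA : Function.Surjective A.mulVecLin) : Function.Injective Aᵀ.mulVecLin := by
  rw [injective_iff_map_eq_zero]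
  intro v hv
  refine dotProduct_eq_zero _ fun w => ?_
  obtain ⟨x, rfl⟩ := hA w
  rw [Matrix.mulVecLin_apply, Matrix.dotProduct_mulVec, ← Matrix.mulVec_transpose,
    ← Matrix.mulVecLin_apply, hv, zero_dotProduct]

theorem mulVecLin_injective_of_isUnit {n : Type*} [Fintype n] [DecidableEq n] {A : Matrix n n ℂ}
    (hA : IsUnit A) : Function.Injective A.mulVecLin :=
  Matrix.mulVec_injective_of_isUnit hA

theorem Gmat_surjective (m : ℕ) : Function.Surjective (Gmat m).mulVecLin := by
  intro y
  refine ⟨Fin.snoc y 0, funext fun i => ?_⟩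
  rw [Matrix.mulVecLin_apply, Gmat_mulVec_apply, Fin.snoc_castSucc]

theorem Fmat_sub_smul_Gmat_surjective (m : ℕ) (μ : ℂ) :
    Function.Surjective (Fmat m - μ • Gmat m).mulVecLin := by
  intro y
  let x : ℕ → ℂ := fun i =>
    Nat.rec 0 (fun i xi => (if h : i < m then y ⟨i, h⟩ else 0) + μ * xi) i
  refine ⟨fun i => x i, funext fun i => ?_⟩
  have hx : x (i + 1) = y i + μ * x i := by simp [x]
  rw [Matrix.mulVecLin_apply, Matrix.sub_mulVec, Matrix.smul_mulVec, Pi.sub_apply, Pi.smul_apply,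
    Fmat_mulVec_apply, Gmat_mulVec_apply, Fin.val_succ, Fin.val_castSucc, hx]
  simp

theorem isUnit_of_isUpperTriangular {h : ℕ} {A : Matrix (Fin h) (Fin h) ℂ}
    (hA : A.IsUpperTriangular) (hd : ∀ i, A i i ≠ 0) : IsUnit A := by
  rw [Matrix.isUnit_iff_isUnit_det, Matrix.det_of_isUpperTriangular hA, isUnit_iff_ne_zero]
  exact Finset.prod_ne_zero_iff.2 fun i _ => hd i

theorem Jmat_sub_smul_one (h : ℕ) (ν μ : ℂ) :
    Jmat h ν - μ • (1 : Matrix (Fin h) (Fin h) ℂ) = Jmat h (ν - μ) := by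
  ext i j
  simp only [Jmat, Matrix.sub_apply, Matrix.smul_apply, Matrix.of_apply, Matrix.one_apply,
    Fin.ext_iff, eq_comm (a := (i : ℕ))]
  split_ifs <;> simp

theorem isUnit_Jmat (h : ℕ) {ν : ℂ} (hν : ν ≠ 0) : IsUnit (Jmat h ν) := by
  refine isUnit_of_isUpperTriangular (fun i j hij => ?_) fun i => by simpa [Jmat] using hν
  have : (j : ℕ) < i := hij
  rw [Jmat, Matrix.of_apply, if_neg (by omega), if_neg (by omega)]

theorem isUnit_one_sub_smul_Jmat_zero (h : ℕ) (μ : ℂ) : IsUnit (1 - μ • Jmat h 0) := by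
  refine isUnit_of_isUpperTriangular (fun i j hij => ?_) fun i => by simp [Jmat]
  have hlt : (j : ℕ) < i := hij
  have hne : i ≠ j := fun h => by simp [h] at hlt
  rw [Matrix.sub_apply, Matrix.one_apply_ne hne, Matrix.smul_apply, Jmat, Matrix.of_apply,
    if_neg (by omega), if_neg (by omega), smul_zero, sub_zero]

theorem matRank_one_Jmat_zero (h k : ℕ) :
    matRank true 1 (Jmat h 0) k = if k < h then 1 else 0 := by
  have hiter : ∀ k x, x ∈ relIter (1 : Matrix (Fin h) (Fin h) ℂ).mulVecLin (Jmat h 0).mulVecLin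
      (relStart ℂ _ true) k ↔ ∀ i : Fin h, h ≤ i + k → x i = 0 := by
    intro k
    induction k with
    | zero => exact fun x => ⟨fun _ i hi => by omega, fun _ => trivial⟩
    | succ k ih =>
      intro x
      simp only [mem_relIter_succ, ih, Matrix.mulVecLin_apply, Matrix.one_mulVec]
      constructor
      · rintro ⟨y, hy, rfl⟩ i hi
        rw [Jmat_zero_mulVec_apply]
        split_ifs with h1
        · exact hy _ (by simp only; omega)
        · rfl
      · intro hx
        refine ⟨fun i => if (i : ℕ) = 0 then 0 else x ⟨i - 1, by omega⟩, fun i hi => ?_,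
          funext fun i => ?_⟩
        · dsimp only
          split_ifs with h1
          · rfl
          · exact hx _ (by simp only; omega)
        · rw [Jmat_zero_mulVec_apply]
          by_cases h1 : (i : ℕ) + 1 < h
          · rw [dif_pos h1, if_neg (Nat.succ_ne_zero _)]
            rfl
          · rw [dif_neg h1, hx i (by omega)]
  have hker : ∀ x, x ∈ LinearMap.ker (Jmat h 0).mulVecLin ↔ ∀ i : Fin h, (i : ℕ) ≠ 0 → x i = 0 := by
    intro x
    rw [LinearMap.mem_ker, Matrix.mulVecLin_apply, funext_iff]
    simp only [Jmat_zero_mulVec_apply, Pi.zero_apply]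
    constructor
    · intro hx i hi
      have := hx ⟨i - 1, by omega⟩
      rw [dif_pos (by simp only; omega)] at this
      rw [← this]
      congr 1
      exact Fin.ext (by simp only; omega)
    · intro hx i
      split_ifs
      · exact hx _ (Nat.succ_ne_zero _)
      · rfl
  rw [matRank, relRank]
  split_ifs with hk
  · refine finrank_eq_one_of_mem_iff ⟨0, by omega⟩ _ fun x => ?_
    rw [Submodule.mem_inf, hker, hiter]
    simp only [ne_eq, Fin.ext_iff]
    exact ⟨fun hx => hx.1, fun hx => ⟨hx, fun i hi => hx i (by omega)⟩⟩
  · rw [Submodule.finrank_eq_zero, Submodule.eq_bot_iff]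
    exact fun x hx => funext fun i => (hiter k x).1 hx.2 i (by omega)

theorem matRank_one_Jmat_zero_transpose (h k : ℕ) :
    matRank true 1 (Jmat h 0)ᵀ k = if k < h then 1 else 0 := by
  rw [← matRank_one_Jmat_zero, ← matRank_submatrix Fin.revPerm Fin.revPerm true 1 (Jmat h 0)]
  congr 1
  · simp
  · ext i j
    simp only [Jmat, Matrix.transpose_apply, Matrix.submatrix_apply, Matrix.of_apply,
      Fin.revPerm_apply, Fin.val_rev, eq_comm (a := (i : ℕ))]
    refine if_congr (by omega) rfl (if_congr (by omega) rfl rfl)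

theorem matRank_Fmat_Gmat (m k : ℕ) :
    matRank false (Fmat m) (Gmat m) k = if m < k then 1 else 0 := by
  have hiter : ∀ k x, x ∈ relIter (Fmat m).mulVecLin (Gmat m).mulVecLin
      (relStart ℂ _ false) k ↔ ∀ i : Fin (m + 1), k ≤ i → x i = 0 := by
    intro k
    induction k with
    | zero =>
      intro x
      rw [relIter, relStart, if_neg Bool.false_ne_true, Submodule.mem_bot, funext_iff]
      simp
    | succ k ih =>
      intro x
      simp only [mem_relIter_succ, ih, Matrix.mulVecLin_apply, funext_iff, Fmat_mulVec_apply,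
        Gmat_mulVec_apply]
      constructor
      · rintro ⟨y, hy, h⟩ i hi
        obtain ⟨i, rfl⟩ := Fin.exists_succ_eq.2 (show i ≠ 0 from fun h => by simp [h] at hi)
        rw [← h]
        exact hy _ (by simpa using hi)
      · intro hx
        refine ⟨Fin.snoc (fun i => x i.succ) 0, fun i => ?_, fun i => by rw [Fin.snoc_castSucc]⟩
        refine Fin.lastCases (fun _ => by simp) (fun i hi => ?_) i
        rw [Fin.snoc_castSucc]
        exact hx _ (by simpa using hi)
  have hker : ∀ x, x ∈ LinearMap.ker (Gmat m).mulVecLin ↔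
      ∀ i : Fin (m + 1), i ≠ Fin.last m → x i = 0 := by
    intro x
    rw [LinearMap.mem_ker, Matrix.mulVecLin_apply, funext_iff]
    simp only [Gmat_mulVec_apply, Pi.zero_apply]
    refine ⟨fun hx i hi => ?_, fun hx i => hx _ (Fin.castSucc_lt_last i).ne⟩
    obtain ⟨i, rfl⟩ := Fin.exists_castSucc_eq.2 hi
    exact hx i
  rw [matRank, relRank]
  split_ifs with hk
  · refine finrank_eq_one_of_mem_iff (Fin.last m) _ fun x => ?_
    rw [Submodule.mem_inf, hker, hiter]
    exact ⟨fun hx => hx.1, fun hx => ⟨hx, fun i hi => by omega⟩⟩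
  · rw [Submodule.finrank_eq_zero, Submodule.eq_bot_iff]
    rintro x ⟨hx1, hx2⟩
    refine funext fun i => ?_
    by_cases hi : i = Fin.last m
    · exact (hiter k x).1 hx2 i (by simp [hi]; omega)
    · exact (hker x).1 hx1 i hi

theorem skewPair_sub_smul {p q : ℕ} (X Y : Matrix (Fin p) (Fin q) ℂ) (μ : ℂ) :
    skewPair X - μ • skewPair Y = skewPair (X - μ • Y) := by
  ext i j
  simp only [skewPair, Matrix.sub_apply, Matrix.smul_apply, Matrix.submatrix_apply]
  rcases finSumFinEquiv.symm i with i | i <;> rcases finSumFinEquiv.symm j with j | j <;> simp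
  ring

namespace Pencil

theorem probeRank_some_skewPair {p q : ℕ} (X Y : Matrix (Fin p) (Fin q) ℂ) (μ : ℂ) (t : Bool)
    (k : ℕ) : probeRank (some μ) t k (skewPair X, skewPair Y) =
      matRank t Y (X - μ • Y) k + matRank t Yᵀ (X - μ • Y)ᵀ k := by
  rw [probeRank, probe, skewPair_sub_smul, matRank_skewPair]

theorem probeRank_none_skewPair {p q : ℕ} (X Y : Matrix (Fin p) (Fin q) ℂ) (t : Bool)
    (k : ℕ) : probeRank none t k (skewPair X, skewPair Y) =
      matRank t X Y k + matRank t Xᵀ Yᵀ k := by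
  rw [probeRank, probe, matRank_skewPair]

end Pencil

theorem matRank_add_transpose_of_isUnit {h : ℕ} (A : Matrix (Fin h) (Fin h) ℂ)
    {B : Matrix (Fin h) (Fin h) ℂ} (hB : IsUnit B) (t : Bool) (k : ℕ) :
    matRank t A B k + matRank t Aᵀ Bᵀ k = 0 := by
  rw [matRank, matRank, relRank_eq_zero_of_injective (mulVecLin_injective_of_isUnit hB),
    relRank_eq_zero_of_injective
      (mulVecLin_injective_of_isUnit ((Matrix.isUnit_transpose B).2 hB))]

theorem matRank_add_transpose_of_surjective {m : ℕ} (A : Matrix (Fin m) (Fin (m + 1)) ℂ)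
    {B : Matrix (Fin m) (Fin (m + 1)) ℂ} (hB : Function.Surjective B.mulVecLin) (k : ℕ) :
    matRank true A B k + matRank true Aᵀ Bᵀ k = 1 := by
  have h := relRank_true_of_surjective (α := A.mulVecLin) hB k
  rw [Module.finrank_fintype_fun_eq_card, Module.finrank_fintype_fun_eq_card, Fintype.card_fin,
    Fintype.card_fin] at h
  rw [matRank, matRank, relRank_eq_zero_of_injective (transpose_mulVec_injective hB)]
  omega

namespace SBlock

open Classical in
/-- Up to an invertible constant, the multiplicity of a given valid block is a difference of two
numbers of the form `probeRank`. -/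
theorem exists_probeRank_eq_add (b : SBlock) (hb : b.valid) :
    ∃ (o : Option ℂ) (t : Bool) (k k' c : ℕ), c ≠ 0 ∧ ∀ d : SBlock,
      Pencil.probeRank o t k d.toPencil =
        Pencil.probeRank o t k' d.toPencil + c * if d = b then 1 else 0 := by
  cases b with
  | H h μ =>
    have hH : ∀ k h ν, Pencil.probeRank (some μ) true k (H h ν).toPencil =
        if ν = μ ∧ k < h then 2 else 0 := fun k h ν => by
      rw [toPencil, Hblk]
      refine (Pencil.probeRank_some_skewPair _ _ μ true k).trans ?_
      rw [Jmat_sub_smul_one]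
      by_cases hν : ν = μ
      · rw [hν, sub_self, Matrix.transpose_one, matRank_one_Jmat_zero,
          matRank_one_Jmat_zero_transpose]
        split_ifs <;> simp_all
      · rw [matRank_add_transpose_of_isUnit _ (isUnit_Jmat h (sub_ne_zero.2 hν)), if_neg (by tauto)]
    have hK : ∀ k h, Pencil.probeRank (some μ) true k (K h).toPencil = 0 := fun k h =>
      (Pencil.probeRank_some_skewPair _ _ μ true k).trans
        (matRank_add_transpose_of_isUnit _ (isUnit_one_sub_smul_Jmat_zero h μ) _ _)
    have hM : ∀ k m, Pencil.probeRank (some μ) true k (M m).toPencil = 1 := fun k m =>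
      (Pencil.probeRank_some_skewPair _ _ μ true k).trans
        (matRank_add_transpose_of_surjective _ (Fmat_sub_smul_Gmat_surjective m μ) _)
    obtain ⟨h, rfl⟩ := Nat.exists_eq_add_of_le' hb
    refine ⟨some μ, true, h, h + 1, 2, two_ne_zero, fun d => ?_⟩
    cases d with
    | H h' ν =>
      rw [hH, hH]
      simp only [H.injEq]
      by_cases hν : ν = μ
      · simp only [hν, true_and, and_true]
        split_ifs <;> omega
      · simp [hν]
    | K h' => simp [hK]
    | M m' => simp [hM]
  | K h =>
    have hH : ∀ k h ν, Pencil.probeRank none true k (H h ν).toPencil = 0 := fun k h ν =>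
      (Pencil.probeRank_none_skewPair _ _ true k).trans
        (matRank_add_transpose_of_isUnit _ isUnit_one _ _)
    have hK : ∀ k h, Pencil.probeRank none true k (K h).toPencil = if k < h then 2 else 0 :=
      fun k h => by
        refine (Pencil.probeRank_none_skewPair _ _ true k).trans ?_
        rw [Matrix.transpose_one, matRank_one_Jmat_zero, matRank_one_Jmat_zero_transpose]
        split_ifs <;> rfl
    have hM : ∀ k m, Pencil.probeRank none true k (M m).toPencil = 1 := fun k m =>
      (Pencil.probeRank_none_skewPair _ _ true k).trans
        (matRank_add_transpose_of_surjective _ (Gmat_surjective m) _)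
    obtain ⟨h, rfl⟩ := Nat.exists_eq_add_of_le' hb
    refine ⟨none, true, h, h + 1, 2, two_ne_zero, fun d => ?_⟩
    cases d with
    | H h' ν => simp [hH]
    | K h' =>
      rw [hK, hK]
      simp only [K.injEq]
      split_ifs <;> omega
    | M m' => simp [hM]
  | M m =>
    have hH : ∀ k h ν, Pencil.probeRank none false k (H h ν).toPencil = 0 := fun k h ν =>
      (Pencil.probeRank_none_skewPair _ _ false k).trans
        (matRank_add_transpose_of_isUnit _ isUnit_one _ _)
    have hK : ∀ k h, Pencil.probeRank none false k (K h).toPencil = 0 := fun k h => by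
      refine (Pencil.probeRank_none_skewPair _ _ false k).trans ?_
      have h1 := mulVecLin_injective_of_isUnit (isUnit_one (M := Matrix (Fin h) (Fin h) ℂ))
      rw [Matrix.transpose_one, matRank, matRank, relRank_false_eq_zero_of_injective h1,
        relRank_false_eq_zero_of_injective h1]
    have hM : ∀ k m, Pencil.probeRank none false k (M m).toPencil = if m < k then 1 else 0 :=
      fun k m => by
        refine (Pencil.probeRank_none_skewPair _ _ false k).trans ?_
        rw [matRank_Fmat_Gmat, matRank,
          relRank_eq_zero_of_injective (transpose_mulVec_injective (Gmat_surjective m)), add_zero]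
    refine ⟨none, false, m + 1, m, 1, one_ne_zero, fun d => ?_⟩
    cases d with
    | H h' ν => simp [hH]
    | K h' => simp [hK]
    | M m' =>
      rw [hM, hM]
      simp only [M.injEq]
      split_ifs <;> omega

end SBlock

theorem RepresentsC.unique {n : ℕ} {P : Pencil n n} {s₁ s₂ : Multiset SBlock}
    (h₁ : RepresentsC P s₁) (h₂ : RepresentsC P s₂) : s₁ = s₂ := by
  classical
  ext b
  by_cases hb : b.valid
  · obtain ⟨o, t, k, k', c, hc, hprobe⟩ := b.exists_probeRank_eq_add hb
    have hsum : ∀ l : List SBlock, (l.map fun d => Pencil.probeRank o t k d.toPencil).sum =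
        (l.map fun d => Pencil.probeRank o t k' d.toPencil).sum + c * l.count b := by
      intro l
      induction l with
      | nil => simp
      | cons d l ih =>
        rw [List.map_cons, List.map_cons, List.sum_cons, List.sum_cons, ih, hprobe,
          List.count_cons]
        simp only [beq_iff_eq]
        ring
    have key : ∀ s : Multiset SBlock, RepresentsC P s →
        Pencil.probeRank o t k P = Pencil.probeRank o t k' P + c * s.count b := by
      rintro s ⟨-, l, rfl, rfl, hl⟩
      have hcast : Pencil.cast rfl rfl (spencilOfList l) = spencilOfList l := rfl
      rw [hcast] at hl
      rw [← hl.probeRank_eq, ← hl.probeRank_eq, Pencil.probeRank_spencilOfList,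
        Pencil.probeRank_spencilOfList, Multiset.coe_count, hsum]
    have := (key s₁ h₁).symm.trans (key s₂ h₂)
    exact Nat.eq_of_mul_eq_mul_left (Nat.pos_of_ne_zero hc) (Nat.add_left_cancel this)
  · rw [Multiset.count_eq_zero_of_notMem fun h => hb (h₁.1 b h),
      Multiset.count_eq_zero_of_notMem fun h => hb (h₂.1 b h)]

/-- **Thompson canonical form** (Theorem 2.5): every skew-symmetric `n × n`
complex matrix pencil is congruent to a direct sum of blocks `H_h(μ)`
(`μ ∈ ℂ`), `K_k`, `M_m`, and this direct sum is uniquely determined up to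
permutation of the summands (i.e. the multiset of blocks is unique). -/
theorem thompson_canonical_form {n : ℕ} (P : Pencil n n) (hP : Pencil.IsSkew P) :
    (∃ s : Multiset SBlock, RepresentsC P s) ∧
      ∀ s₁ s₂ : Multiset SBlock, RepresentsC P s₁ → RepresentsC P s₂ → s₁ = s₂ := by
  exact ⟨exists_representsC P hP, fun _ _ h₁ h₂ => h₁.unique h₂⟩
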